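/- Let n ≥ 5, let Γ^(n−1) be the Csirmaz access structure on P = {1, …, n−1} (with parameter k the largest integer such that n−1 ≥ 2^k − 2 + k), let Γ̄ be its purification on P' = P ∪ {n}, and let S be an entropy function realizing Γ̄ with secret size c. Then for every i with 0 ≤ i ≤ 2^k − 3: S(A ∪ B_i) + S(B_{i+1}) ≥ S(A ∪ B_{i+1}) + S(B_i) + 2c. -/

import Mathlib

/-- The data of a Csirmaz access structure on `P = {1, ..., n}` with parameter `k`:
`k` is the largest integer with `n ≥ 2^k - 2 + k`; `A ⊆ P` has `k` elements;
`Ai 0, Ai 1, ..., Ai (2^k - 2)` enumerates all nonempty subsets of `A` in order of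
non-increasing cardinality; `Bi 0 = ∅ ⊆ Bi 1 ⊆ ... ⊆ Bi (2^k - 2) = P \ A` is a
nested chain with `|Bi i| = i` for `i < 2^k - 2` (i.e. `Bi i = {b_1, ..., b_i}`). -/
structure CsirmazSetup (n k : ℕ) (A : Finset ℕ) (Ai Bi : ℕ → Finset ℕ) : Prop where
  hn : 4 ≤ n
  hk : 2 ^ k - 2 + k ≤ n
  hk_max : ∀ k' : ℕ, 2 ^ k' - 2 + k' ≤ n → k' ≤ k
  hA_sub : A ⊆ Finset.Icc 1 n
  hA_card : A.card = k
  hA0 : Ai 0 = A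
  hAi_sub : ∀ i ≤ 2 ^ k - 2, Ai i ⊆ A
  hAi_ne : ∀ i ≤ 2 ^ k - 2, (Ai i).Nonempty
  hAi_inj : ∀ i ≤ 2 ^ k - 2, ∀ j ≤ 2 ^ k - 2, Ai i = Ai j → i = j
  hAi_all : ∀ X ⊆ A, X.Nonempty → ∃ i ≤ 2 ^ k - 2, Ai i = X
  hAi_card_anti : ∀ i ≤ 2 ^ k - 2, ∀ j ≤ 2 ^ k - 2, i ≤ j → (Ai j).card ≤ (Ai i).card
  hB0 : Bi 0 = ∅
  hB_top : Bi (2 ^ k - 2) = Finset.Icc 1 n \ A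
  hB_mono : ∀ i j : ℕ, i ≤ j → j ≤ 2 ^ k - 2 → Bi i ⊆ Bi j
  hB_card : ∀ i < 2 ^ k - 2, (Bi i).card = i
  hB_range : ∀ i ≤ 2 ^ k - 2, Bi i ⊆ Finset.Icc 1 n \ A

/-- The Csirmaz access structure `Γ^(n)`: the monotone closure (inside `2^P`) of the
minimal sets `M_i = Ai i ∪ Bi i`, `0 ≤ i ≤ 2^k - 2`. -/
def CsirmazGamma (n k : ℕ) (Ai Bi : ℕ → Finset ℕ) : Set (Finset ℕ) :=
  {Z | Z ⊆ Finset.Icc 1 n ∧ ∃ i ≤ 2 ^ k - 2, Ai i ∪ Bi i ⊆ Z}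

/-- Gottesman's purification of a monotone access structure `Γ` on `P`, adding a
new player `p`:  `Γ̄ = {Z ⊆ P ∪ {p} : Z ∩ P ∈ Γ, or (p ∈ Z and P \ Z ∉ Γ)}`. -/
def Purification (P : Finset ℕ) (p : ℕ) (Γ : Set (Finset ℕ)) : Set (Finset ℕ) :=
  {Z | Z ⊆ P ∪ {p} ∧ (Z ∩ P ∈ Γ ∨ (p ∈ Z ∧ P \ Z ∉ Γ))}

/-- Information-theoretic model of a perfect quantum secret sharing scheme
(Imai et al.): an entropy function `S` on subsets of `Q ∪ {R}` realizing the
access structure `Γ` on the player set `Q` with secret size `c > 0`,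
where `R ∉ Q` is the reference symbol.  The mutual information of disjoint
`X, Y` is `I(X : Y) = S X + S Y - S (X ∪ Y)`. -/
structure EntropyFn (Q : Finset ℕ) (R : ℕ) (Γ : Set (Finset ℕ)) (c : ℝ)
    (S : Finset ℕ → ℝ) : Prop where
  c_pos : 0 < c
  empty : S ∅ = 0
  nonneg : ∀ X : Finset ℕ, 0 ≤ S X
  submod : ∀ X Y : Finset ℕ, X ⊆ Q ∪ {R} → Y ⊆ Q ∪ {R} →
    S X + S Y ≥ S (X ∪ Y) + S (X ∩ Y)
  purity : ∀ X : Finset ℕ, X ⊆ Q ∪ {R} → S X = S ((Q ∪ {R}) \ X)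
  ref : S {R} = c
  recov : ∀ A ∈ Γ, S A + S {R} - S (A ∪ {R}) = 2 * c
  secrecy : ∀ A : Finset ℕ, A ⊆ Q → A ∉ Γ → S A + S {R} - S (A ∪ {R}) = 0

/-!
Adding the reference `R` to both sets in the submodular inequality and rewriting it with the known
values of `I(· : R)` yields a gain: if `X`, `Y`, `X ∪ Y` are authorized and `X ∩ Y` is not, then
`S X + S Y ≥ S (X ∪ Y) + S (X ∩ Y) + 2c`. Apply this to `X = A ∪ B_i` and
`Y = M_{i+1} = A_{i+1} ∪ B_{i+1}`, whose intersection is `A_{i+1} ∪ B_i`, and add plain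
submodularity for `A_{i+1} ∪ B_i` and `B_{i+1}`. The intersection is unauthorized because a minimal
set `M_j` inside it would have `B_j ⊆ B_i`, hence `j ≤ i`, and `A_j ⊆ A_{i+1}`, hence `i + 1 ≤ j`.
-/

section PerfectSharing

variable {α : Type*} [DecidableEq α]

/-- The mutual information `I(X : Y)` of an entropy function `S`, meaningful for disjoint
`X` and `Y`. -/
def mutualInfo (S : Finset α → ℝ) (X Y : Finset α) : ℝ :=
  S X + S Y - S (X ∪ Y)

/-- `S` is submodular on `P ∪ {R}`, and the players in `P` share a secret of size `c`, held by the
reference `R`, perfectly according to `Γ`. Unlike in `EntropyFn`, purity is not imposed, so `P` may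
be a proper subset of the players of a larger scheme. -/
structure IsPerfectSharing (P : Finset α) (R : α) (Γ : Set (Finset α)) (c : ℝ)
    (S : Finset α → ℝ) : Prop where
  submod : ∀ X Y : Finset α, X ⊆ P ∪ {R} → Y ⊆ P ∪ {R} → S (X ∪ Y) + S (X ∩ Y) ≤ S X + S Y
  recov : ∀ X ⊆ P, X ∈ Γ → mutualInfo S X {R} = 2 * c
  secrecy : ∀ X ⊆ P, X ∉ Γ → mutualInfo S X {R} = 0

variable {P A A' B B' X Y : Finset α} {R : α} {Γ : Set (Finset α)} {c : ℝ} {S : Finset α → ℝ}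

namespace IsPerfectSharing

theorem union_add_inter_add_le (hS : IsPerfectSharing P R Γ c S) (hXP : X ⊆ P) (hYP : Y ⊆ P)
    (hX : X ∈ Γ) (hY : Y ∈ Γ) (hunion : X ∪ Y ∈ Γ) (hinter : X ∩ Y ∉ Γ) :
    S (X ∪ Y) + S (X ∩ Y) + 2 * c ≤ S X + S Y := by
  have hsub := hS.submod (X ∪ {R}) (Y ∪ {R}) (Finset.union_subset_union_left hXP)
    (Finset.union_subset_union_left hYP)
  rw [← Finset.union_union_distrib_right, ← Finset.inter_union_distrib_right] at hsub
  have hIX := hS.recov X hXP hX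
  have hIY := hS.recov Y hYP hY
  have hIunion := hS.recov (X ∪ Y) (Finset.union_subset hXP hYP) hunion
  have hIinter := hS.secrecy (X ∩ Y) (Finset.inter_subset_left.trans hXP) hinter
  unfold mutualInfo at hIX hIY hIunion hIinter
  linarith

theorem union_add_add_le_of_disjoint (hS : IsPerfectSharing P R Γ c S) (hA : A' ⊆ A) (hB : B ⊆ B')
    (hdisj : Disjoint A B') (hP : A ∪ B' ⊆ P) (hAB : A ∪ B ∈ Γ) (hA'B' : A' ∪ B' ∈ Γ)
    (hAB' : A ∪ B' ∈ Γ) (hA'B : A' ∪ B ∉ Γ) :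
    S (A ∪ B') + S B + 2 * c ≤ S (A ∪ B) + S B' := by
  have hunion : A ∪ B ∪ (A' ∪ B') = A ∪ B' := by grind
  have hinter : (A ∪ B) ∩ (A' ∪ B') = A' ∪ B := by grind [Finset.disjoint_left]
  have hunion' : A' ∪ B ∪ B' = A' ∪ B' := by grind
  have hinter' : (A' ∪ B) ∩ B' = B := by grind [Finset.disjoint_left]
  have hABP : A ∪ B ⊆ P := (Finset.union_subset_union_right hB).trans hP
  have hA'B'P : A' ∪ B' ⊆ P := (Finset.union_subset_union_left hA).trans hP
  have hgain := hS.union_add_inter_add_le hABP hA'B'P hAB hA'B' (hunion ▸ hAB') (hinter ▸ hA'B)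
  have hsub := hS.submod (A' ∪ B) B' (by grind) (by grind)
  rw [hunion, hinter] at hgain
  rw [hunion', hinter'] at hsub
  linarith

end IsPerfectSharing

/-- The access structure generated by the sets `Ai j ∪ Bi j`, `j ≤ N`. Its members need not consist
of players; `IsPerfectSharing` only looks at those that do. -/
def chainAccess (N : ℕ) (Ai Bi : ℕ → Finset α) : Set (Finset α) :=
  {X | ∃ j ≤ N, Ai j ∪ Bi j ⊆ X}

/-- What the argument needs of a Csirmaz structure: the sets `Ai j` are subsets of `A = Ai 0`, none
contained in a later one, and `Bi` is a strictly increasing chain from `∅` disjoint from `A`. -/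
structure IsCsirmazChain (N : ℕ) (A : Finset α) (Ai Bi : ℕ → Finset α) : Prop where
  Ai_zero : Ai 0 = A
  Bi_zero : Bi 0 = ∅
  Ai_subset : ∀ j ≤ N, Ai j ⊆ A
  not_Ai_subset : ∀ i j, i < j → j ≤ N → ¬Ai i ⊆ Ai j
  strictMonoOn_Bi : StrictMonoOn Bi (Set.Iic N)
  disjoint_Bi : ∀ j ≤ N, Disjoint A (Bi j)

namespace IsCsirmazChain

variable {N : ℕ} {Ai Bi : ℕ → Finset α}

theorem union_mem_chainAccess (hC : IsCsirmazChain N A Ai Bi) (B : Finset α) :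
    A ∪ B ∈ chainAccess N Ai Bi :=
  ⟨0, N.zero_le, by simp [hC.Ai_zero, hC.Bi_zero]⟩

theorem Ai_succ_union_Bi_notMem_chainAccess (hC : IsCsirmazChain N A Ai Bi) {i : ℕ} (hi : i < N) :
    Ai (i + 1) ∪ Bi i ∉ chainAccess N Ai Bi := by
  rintro ⟨j, hj, hsub⟩
  obtain ⟨hAsub, hBsub⟩ := Finset.union_subset_iff.mp hsub
  have hAj : Ai j ⊆ Ai (i + 1) :=
    ((hC.disjoint_Bi i hi.le).mono_left (hC.Ai_subset j hj)).left_le_of_le_sup_right hAsub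
  have hBj : Bi j ⊆ Bi i :=
    ((hC.disjoint_Bi j hj).mono_left (hC.Ai_subset (i + 1) hi)).symm.left_le_of_le_sup_left hBsub
  have hji : j ≤ i := (hC.strictMonoOn_Bi.le_iff_le hj hi.le).mp hBj
  exact hC.not_Ai_subset j (i + 1) (Nat.lt_succ_of_le hji) hi hAj

end IsCsirmazChain

theorem csirmaz_entropy_step_general {N : ℕ} {Ai Bi : ℕ → Finset α}
    (hC : IsCsirmazChain N A Ai Bi) (hP : A ∪ Bi N ⊆ P)
    (hS : IsPerfectSharing P R (chainAccess N Ai Bi) c S) {i : ℕ} (hi : i < N) :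
    S (A ∪ Bi i) + S (Bi (i + 1)) ≥ S (A ∪ Bi (i + 1)) + S (Bi i) + 2 * c := by
  have hmono := hC.strictMonoOn_Bi.monotoneOn
  have hsucc : Bi i ⊆ Bi (i + 1) := hmono hi.le hi i.le_succ
  have htop : Bi (i + 1) ⊆ Bi N := hmono hi Set.self_mem_Iic hi
  exact hS.union_add_add_le_of_disjoint (hC.Ai_subset _ hi) hsucc (hC.disjoint_Bi _ hi)
    ((Finset.union_subset_union_right htop).trans hP) (hC.union_mem_chainAccess _)
    ⟨i + 1, hi, subset_rfl⟩ (hC.union_mem_chainAccess _)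
    (hC.Ai_succ_union_Bi_notMem_chainAccess hi)

end PerfectSharing

namespace CsirmazSetup

variable {n k : ℕ} {A : Finset ℕ} {Ai Bi : ℕ → Finset ℕ}

theorem le_card_Bi (hcs : CsirmazSetup n k A Ai Bi) {j : ℕ} (hj : j ≤ 2 ^ k - 2) :
    j ≤ (Bi j).card := by
  rcases hj.lt_or_eq with hlt | rfl
  · exact (hcs.hB_card j hlt).ge
  · rw [hcs.hB_top, Finset.card_sdiff_of_subset hcs.hA_sub, hcs.hA_card, Nat.card_Icc]
    have := hcs.hk
    omega

theorem strictMonoOn_Bi (hcs : CsirmazSetup n k A Ai Bi) :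
    StrictMonoOn Bi (Set.Iic (2 ^ k - 2)) := by
  intro i _ j hj hij
  refine (hcs.hB_mono i j hij.le hj).ssubset_of_ne fun heq => ?_
  have hcard := hcs.le_card_Bi hj
  rw [← heq, hcs.hB_card i (hij.trans_le hj)] at hcard
  exact hij.not_ge hcard

theorem not_Ai_subset (hcs : CsirmazSetup n k A Ai Bi) {i j : ℕ} (hij : i < j)
    (hj : j ≤ 2 ^ k - 2) : ¬Ai i ⊆ Ai j := by
  intro hsub
  have hi := hij.le.trans hj
  have heq := Finset.eq_of_subset_of_card_le hsub (hcs.hAi_card_anti i hi j hj hij.le)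
  exact hij.ne (hcs.hAi_inj i hi j hj heq)

theorem isCsirmazChain (hcs : CsirmazSetup n k A Ai Bi) :
    IsCsirmazChain (2 ^ k - 2) A Ai Bi where
  Ai_zero := hcs.hA0
  Bi_zero := hcs.hB0
  Ai_subset := hcs.hAi_sub
  not_Ai_subset _ _ := hcs.not_Ai_subset
  strictMonoOn_Bi := hcs.strictMonoOn_Bi
  disjoint_Bi j hj := Finset.disjoint_sdiff.mono_right (hcs.hB_range j hj)

theorem union_Bi_top (hcs : CsirmazSetup n k A Ai Bi) :
    A ∪ Bi (2 ^ k - 2) = Finset.Icc 1 n := by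
  rw [hcs.hB_top, Finset.union_sdiff_of_subset hcs.hA_sub]

end CsirmazSetup

theorem mem_csirmazGamma_iff {n k : ℕ} {Ai Bi : ℕ → Finset ℕ} {X : Finset ℕ}
    (hX : X ⊆ Finset.Icc 1 n) :
    X ∈ CsirmazGamma n k Ai Bi ↔ X ∈ chainAccess (2 ^ k - 2) Ai Bi :=
  and_iff_right hX

theorem mem_purification_iff_of_subset {P X : Finset ℕ} {p : ℕ} {Γ : Set (Finset ℕ)} (hp : p ∉ P)
    (hX : X ⊆ P) : X ∈ Purification P p Γ ↔ X ∈ Γ := by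
  have hpX : p ∉ X := fun h => hp (hX h)
  simp [Purification, Finset.inter_eq_left.mpr hX, hpX,
    hX.trans (Finset.subset_insert p P)]

theorem EntropyFn.isPerfectSharing {P Q : Finset ℕ} {R : ℕ} {Γ Δ : Set (Finset ℕ)} {c : ℝ}
    {S : Finset ℕ → ℝ} (hS : EntropyFn Q R Δ c S) (hPQ : P ⊆ Q)
    (hΓ : ∀ X ⊆ P, (X ∈ Δ ↔ X ∈ Γ)) : IsPerfectSharing P R Γ c S where
  submod X Y hX hY :=
    have hPQR : P ∪ {R} ⊆ Q ∪ {R} := Finset.union_subset_union_left hPQ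
    hS.submod X Y (hX.trans hPQR) (hY.trans hPQR)
  recov X hXP hX := hS.recov X ((hΓ X hXP).mpr hX)
  secrecy X hXP hX := hS.secrecy X (hXP.trans hPQ) (mt (hΓ X hXP).mp hX)

theorem EntropyFn.isPerfectSharing_chainAccess {n k p R : ℕ} {Q : Finset ℕ}
    {Ai Bi : ℕ → Finset ℕ} {c : ℝ} {S : Finset ℕ → ℝ}
    (hS : EntropyFn Q R (Purification (Finset.Icc 1 n) p (CsirmazGamma n k Ai Bi)) c S)
    (hQ : Finset.Icc 1 n ⊆ Q) (hp : p ∉ Finset.Icc 1 n) :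
    IsPerfectSharing (Finset.Icc 1 n) R (chainAccess (2 ^ k - 2) Ai Bi) c S :=
  hS.isPerfectSharing hQ fun _ hX =>
    (mem_purification_iff_of_subset hp hX).trans (mem_csirmazGamma_iff hX)

/-- for an entropy function realizing the purification (on
`P' = {1,…,n}`) of the Csirmaz access structure `Γ^(n-1)` on `P = {1,…,n-1}`:
`S(A ∪ B_i) + S(B_{i+1}) ≥ S(A ∪ B_{i+1}) + S(B_i) + 2c` for `0 ≤ i ≤ 2^k - 3`. -/
theorem csirmaz_entropy_step (n k : ℕ) (hn : 5 ≤ n) (A : Finset ℕ)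
    (Ai Bi : ℕ → Finset ℕ) (hcs : CsirmazSetup (n - 1) k A Ai Bi)
    (R : ℕ) (hR : R ∉ Finset.Icc 1 n) (c : ℝ) (S : Finset ℕ → ℝ)
    (hS : EntropyFn (Finset.Icc 1 n) R
      (Purification (Finset.Icc 1 (n - 1)) n (CsirmazGamma (n - 1) k Ai Bi)) c S) :
    ∀ i : ℕ, i + 1 ≤ 2 ^ k - 2 →
      S (A ∪ Bi i) + S (Bi (i + 1)) ≥ S (A ∪ Bi (i + 1)) + S (Bi i) + 2 * c := by
  intro i hi
  have hsharing := hS.isPerfectSharing_chainAccess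
    (Finset.Icc_subset_Icc_right n.pred_le) (by simp only [Finset.mem_Icc]; omega)
  exact csirmaz_entropy_step_general hcs.isCsirmazChain hcs.union_Bi_top.subset hsharing hi
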